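/- Let X be a totally disconnected compact Hausdorff space, R = ℝ or ℂ (or more generally a Banach ring over which Tietze extension holds for X), and K₀, K₁ ⊆ X closed subsets. Then the natural algebra homomorphism C(K₀,R) ⊗̂_{C(X,R)} C(K₁,R) → C(K₀ ∩ K₁, R), induced by the two restriction maps, is an isomorphism of Banach algebras. -/

import Mathlib

/-! A closed `K ⊆ X` presents `C(K, 𝕜)` as `C(X, 𝕜) ⧸ I K`, where `I K` is the ideal of functions
vanishing on `K`; hence the tensor product is `C(X, 𝕜) ⧸ (I K₀ + I K₁)`. The algebraic part of the
theorem is the equality `I K₀ + I K₁ = I (K₀ ∩ K₁)`: if `F` vanishes on `K₀ ∩ K₁`, then by Tietze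
there is `H` equal to `0` on `K₀` and to `F` on `K₁`, and `F = H + (F - H)`.

The isomorphism is isometric because a function on `K₀ ∩ K₁` extends to `X` without increasing its
sup norm, which exhibits the corresponding tensor as a single `f ⊗ 1` with `‖f‖` under control. -/

open scoped TensorProduct

noncomputable section

/-- The restriction algebra homomorphism `C(X,𝕜) →ₐ[𝕜] C(K,𝕜)`. -/
def resHom (𝕜 : Type*) [RCLike 𝕜] {X : Type*} [TopologicalSpace X] (K : Set X) :
    C(X, 𝕜) →ₐ[𝕜] C(K, 𝕜) :=
  ContinuousMap.compRightAlgHom 𝕜 𝕜 ⟨Subtype.val, continuous_subtype_val⟩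

/-- `C(K,𝕜)` is a `C(X,𝕜)`-algebra via restriction. -/
instance algebraRes (𝕜 : Type*) [RCLike 𝕜] {X : Type*} [TopologicalSpace X] (K : Set X) :
    Algebra C(X, 𝕜) C(K, 𝕜) :=
  (resHom 𝕜 K).toRingHom.toAlgebra

/-- The projective tensor seminorm on the algebraic tensor product
`C(K₀,𝕜) ⊗[C(X,𝕜)] C(K₁,𝕜)`. -/
def projSeminorm (𝕜 : Type*) [RCLike 𝕜] {X : Type*} [TopologicalSpace X]
    (K₀ K₁ : Set X) [CompactSpace K₀] [CompactSpace K₁]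
    (t : C(K₀, 𝕜) ⊗[C(X, 𝕜)] C(K₁, 𝕜)) : ℝ :=
  sInf { s : ℝ | ∃ l : List (C(K₀, 𝕜) × C(K₁, 𝕜)),
    t = (l.map fun p => p.1 ⊗ₜ[C(X, 𝕜)] p.2).sum ∧
    s = (l.map fun p => ‖p.1‖ * ‖p.2‖).sum }

section TensorProduct

variable {R A B : Type*} [CommRing R] [Ring A] [Ring B] [Algebra R A] [Algebra R B]

lemma algebraMap_tensorProduct_surjective (hA : Function.Surjective (algebraMap R A))
    (hB : Function.Surjective (algebraMap R B)) :
    Function.Surjective (algebraMap R (A ⊗[R] B)) :=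
  (Algebra.TensorProduct.includeLeft_surjective R A hB).comp hA

lemma productMap_injective_of_ker_le_sup {S : Type*} [CommSemiring S] [Algebra R S]
    (hA : Function.Surjective (algebraMap R A)) (hB : Function.Surjective (algebraMap R B))
    (f : A →ₐ[R] S) (g : B →ₐ[R] S)
    (hker : RingHom.ker (algebraMap R S) ≤
      RingHom.ker (algebraMap R A) ⊔ RingHom.ker (algebraMap R B)) :
    Function.Injective (Algebra.TensorProduct.productMap f g) := by
  rw [injective_iff_map_eq_zero]
  intro t ht
  obtain ⟨r, rfl⟩ := algebraMap_tensorProduct_surjective hA hB t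
  rw [AlgHom.commutes] at ht
  obtain ⟨a, ha, b, hb, rfl⟩ := Submodule.mem_sup.1 (hker ht)
  have ha' : algebraMap R (A ⊗[R] B) a = 0 := by
    rw [Algebra.TensorProduct.algebraMap_apply, RingHom.mem_ker.1 ha, TensorProduct.zero_tmul]
  have hb' : algebraMap R (A ⊗[R] B) b = 0 := by
    rw [Algebra.TensorProduct.algebraMap_apply', RingHom.mem_ker.1 hb, TensorProduct.tmul_zero]
  rw [map_add, ha', hb', add_zero]

end TensorProduct

universe u in
lemma exists_continuousMap_eqOn_eqOn {X : Type u} {Y : Type*} [TopologicalSpace X]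
    [NormalSpace X] [TopologicalSpace Y] [TietzeExtension.{u} Y] {K₀ K₁ : Set X} (h₀ : IsClosed K₀)
    (h₁ : IsClosed K₁) (F G : C(X, Y)) (hFG : Set.EqOn F G (K₀ ∩ K₁)) :
    ∃ H : C(X, Y), Set.EqOn H F K₀ ∧ Set.EqOn H G K₁ := by
  classical
  let glued : X → Y := K₀.piecewise F G
  have h_glued₀ : Set.EqOn glued F K₀ := Set.piecewise_eqOn _ _ _
  have h_glued₁ : Set.EqOn glued G K₁ := fun x hx => by
    by_cases hx₀ : x ∈ K₀
    · exact (h_glued₀ hx₀).trans (hFG ⟨hx₀, hx⟩)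
    · exact Set.piecewise_eq_of_notMem _ _ _ hx₀
  have h_glued : ContinuousOn glued (K₀ ∪ K₁) :=
    (F.continuous.continuousOn.congr h_glued₀).union_of_isClosed
      (G.continuous.continuousOn.congr h_glued₁) h₀ h₁
  obtain ⟨H, hH⟩ := ContinuousMap.exists_restrict_eq (h₀.union h₁) ⟨_, h_glued.domRestrict⟩
  have hH_glued : Set.EqOn H glued (K₀ ∪ K₁) := fun x hx => DFunLike.congr_fun hH ⟨x, hx⟩
  exact ⟨H, (hH_glued.mono Set.subset_union_left).trans h_glued₀,
    (hH_glued.mono Set.subset_union_right).trans h_glued₁⟩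

section Restriction

variable {𝕜 : Type*} [RCLike 𝕜] {X : Type*} [TopologicalSpace X] {K K₀ K₁ : Set X}

lemma mem_ker_algebraMap_restrict {F : C(X, 𝕜)} :
    F ∈ RingHom.ker (algebraMap C(X, 𝕜) C(K, 𝕜)) ↔ Set.EqOn F 0 K := by
  rw [RingHom.mem_ker, DFunLike.ext_iff, Subtype.forall]
  rfl

lemma algebraMap_restrict_surjective [NormalSpace X] (hK : IsClosed K) :
    Function.Surjective (algebraMap C(X, 𝕜) C(K, 𝕜)) :=
  ContinuousMap.exists_restrict_eq hK

lemma exists_algebraMap_restrict_eq_norm_le [NormalSpace X] (hK : IsClosed K) [CompactSpace K]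
    (f : C(K, 𝕜)) : ∃ F : C(X, 𝕜), algebraMap C(X, 𝕜) C(K, 𝕜) F = f ∧ ∀ x, ‖F x‖ ≤ ‖f‖ := by
  obtain ⟨F, hnorm, hF⟩ := BoundedContinuousFunction.exists_norm_eq_domRestrict_eq hK 𝕜
    (BoundedContinuousFunction.mkOfCompact f)
  refine ⟨F.toContinuousMap, ContinuousMap.ext fun x => DFunLike.congr_fun hF x, fun x => ?_⟩
  rw [← BoundedContinuousFunction.norm_mkOfCompact f, ← hnorm]
  exact F.norm_coe_le_norm x

theorem ker_algebraMap_restrict_inter [NormalSpace X] (h₀ : IsClosed K₀) (h₁ : IsClosed K₁) :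
    RingHom.ker (algebraMap C(X, 𝕜) C(↥(K₀ ∩ K₁), 𝕜)) =
      RingHom.ker (algebraMap C(X, 𝕜) C(K₀, 𝕜)) ⊔ RingHom.ker (algebraMap C(X, 𝕜) C(K₁, 𝕜)) := by
  refine le_antisymm (fun F hF => ?_) (sup_le (fun F hF => ?_) fun F hF => ?_) <;>
    rw [mem_ker_algebraMap_restrict] at hF
  · obtain ⟨H, hH₀, hH₁⟩ := exists_continuousMap_eqOn_eqOn h₀ h₁ 0 F hF.symm
    refine Submodule.mem_sup.2 ⟨H, mem_ker_algebraMap_restrict.2 hH₀, F - H,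
      mem_ker_algebraMap_restrict.2 fun x hx => ?_, add_sub_cancel H F⟩
    exact sub_eq_zero.2 (hH₁ hx).symm
  · exact mem_ker_algebraMap_restrict.2 (hF.mono Set.inter_subset_left)
  · exact mem_ker_algebraMap_restrict.2 (hF.mono Set.inter_subset_right)

/-- Restriction `C(K, 𝕜) → C(L, 𝕜)` for `L ⊆ K`, as a homomorphism of `C(X, 𝕜)`-algebras. -/
def restrictAlgHom (𝕜 : Type*) [RCLike 𝕜] {L K : Set X} (h : L ⊆ K) :
    C(K, 𝕜) →ₐ[C(X, 𝕜)] C(L, 𝕜) where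
  __ := ContinuousMap.compRightAlgHom 𝕜 𝕜 ⟨Set.inclusion h, continuous_inclusion h⟩
  commutes' _ := rfl

lemma norm_restrictAlgHom_le {L : Set X} (h : L ⊆ K) [CompactSpace L] [CompactSpace K]
    (f : C(K, 𝕜)) : ‖restrictAlgHom 𝕜 h f‖ ≤ ‖f‖ :=
  (ContinuousMap.norm_le _ (norm_nonneg f)).2 fun x => f.norm_coe_le_norm (Set.inclusion h x)

end Restriction

section ProjSeminorm

variable {𝕜 : Type*} [RCLike 𝕜] {X : Type*} [TopologicalSpace X] {K₀ K₁ : Set X}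
  [CompactSpace K₀] [CompactSpace K₁]

lemma projSeminorm_tmul_le (f : C(K₀, 𝕜)) (g : C(K₁, 𝕜)) :
    projSeminorm 𝕜 K₀ K₁ (f ⊗ₜ g) ≤ ‖f‖ * ‖g‖ := by
  refine csInf_le ⟨0, ?_⟩ ⟨[(f, g)], by simp, by simp⟩
  rintro _ ⟨l, -, rfl⟩
  refine List.sum_nonneg (List.forall_mem_map.2 fun p _ => ?_)
  positivity

lemma le_projSeminorm {p : C(K₀, 𝕜) ⊗[C(X, 𝕜)] C(K₁, 𝕜) → ℝ}
    (hp_add : ∀ s t, p (s + t) ≤ p s + p t) (hp_tmul : ∀ f g, p (f ⊗ₜ g) ≤ ‖f‖ * ‖g‖)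
    (t : C(K₀, 𝕜) ⊗[C(X, 𝕜)] C(K₁, 𝕜)) : p t ≤ projSeminorm 𝕜 K₀ K₁ t := by
  have hp_zero : p 0 ≤ 0 := by simpa using hp_tmul 0 0
  -- Without a representation of `t` the infimum would be the junk value `sInf ∅ = 0`.
  obtain ⟨S, hS⟩ := TensorProduct.exists_multiset t
  refine le_csInf ⟨_, S.toList, ?_, rfl⟩ ?_
  · rw [hS, ← Multiset.sum_coe, ← Multiset.map_coe, S.coe_toList]
  · rintro _ ⟨l, rfl, rfl⟩
    refine (List.le_sum_of_subadditive p hp_zero hp_add _).trans ?_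
    rw [List.map_map]
    exact List.sum_le_sum fun a _ => hp_tmul a.1 a.2

lemma projSeminorm_algebraMap_le {F : C(X, 𝕜)} {r : ℝ} (hr : 0 ≤ r) (hF : ∀ x, ‖F x‖ ≤ r) :
    projSeminorm 𝕜 K₀ K₁ (algebraMap _ _ F) ≤ r := by
  have hF_norm : ‖algebraMap C(X, 𝕜) C(K₀, 𝕜) F‖ ≤ r :=
    (ContinuousMap.norm_le _ hr).2 fun x => hF x
  have h_one : ‖(1 : C(K₁, 𝕜))‖ ≤ 1 := (ContinuousMap.norm_le _ zero_le_one).2 fun x => by simp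
  calc projSeminorm 𝕜 K₀ K₁ (algebraMap _ _ F)
      ≤ ‖algebraMap C(X, 𝕜) C(K₀, 𝕜) F‖ * ‖(1 : C(K₁, 𝕜))‖ := projSeminorm_tmul_le _ _
    _ ≤ r * 1 := mul_le_mul hF_norm h_one (norm_nonneg _) hr
    _ = r := mul_one r

end ProjSeminorm

section RestrictMul

variable {X : Type*} [TopologicalSpace X]

/-- The multiplication map `f ⊗ g ↦ f|_{K₀ ∩ K₁} * g|_{K₀ ∩ K₁}`, as a homomorphism of
`C(X, 𝕜)`-algebras. It is defined on the algebraic tensor product. -/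
def restrictMul (𝕜 : Type*) [RCLike 𝕜] (K₀ K₁ : Set X) :
    C(K₀, 𝕜) ⊗[C(X, 𝕜)] C(K₁, 𝕜) →ₐ[C(X, 𝕜)] C(↥(K₀ ∩ K₁), 𝕜) :=
  Algebra.TensorProduct.productMap (restrictAlgHom 𝕜 Set.inter_subset_left)
    (restrictAlgHom 𝕜 Set.inter_subset_right)

variable {𝕜 : Type*} [RCLike 𝕜] {K₀ K₁ : Set X}

lemma restrictMul_bijective [NormalSpace X] (h₀ : IsClosed K₀) (h₁ : IsClosed K₁) :
    Function.Bijective (restrictMul 𝕜 K₀ K₁) := by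
  refine ⟨productMap_injective_of_ker_le_sup (algebraMap_restrict_surjective h₀)
    (algebraMap_restrict_surjective h₁) _ _ (ker_algebraMap_restrict_inter h₀ h₁).le, fun f => ?_⟩
  obtain ⟨F, rfl⟩ := algebraMap_restrict_surjective (h₀.inter h₁) f
  exact ⟨algebraMap _ _ F, (restrictMul 𝕜 K₀ K₁).commutes F⟩

variable [CompactSpace K₀] [CompactSpace K₁] [CompactSpace ↥(K₀ ∩ K₁)]

lemma norm_restrictMul_le_projSeminorm (t : C(K₀, 𝕜) ⊗[C(X, 𝕜)] C(K₁, 𝕜)) :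
    ‖restrictMul 𝕜 K₀ K₁ t‖ ≤ projSeminorm 𝕜 K₀ K₁ t :=
  le_projSeminorm (p := fun t => ‖restrictMul 𝕜 K₀ K₁ t‖)
    (fun s t => by simpa only [map_add] using norm_add_le _ _)
    (fun f g => norm_mul_le_of_le (norm_restrictAlgHom_le Set.inter_subset_left f)
      (norm_restrictAlgHom_le Set.inter_subset_right g)) t

lemma projSeminorm_le_norm_restrictMul [NormalSpace X] (h₀ : IsClosed K₀) (h₁ : IsClosed K₁)
    (t : C(K₀, 𝕜) ⊗[C(X, 𝕜)] C(K₁, 𝕜)) :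
    projSeminorm 𝕜 K₀ K₁ t ≤ ‖restrictMul 𝕜 K₀ K₁ t‖ := by
  obtain ⟨F, hF, hF_norm⟩ :=
    exists_algebraMap_restrict_eq_norm_le (h₀.inter h₁) (restrictMul 𝕜 K₀ K₁ t)
  obtain rfl : algebraMap _ _ F = t :=
    (restrictMul_bijective h₀ h₁).injective (((restrictMul 𝕜 K₀ K₁).commutes F).trans hF)
  exact projSeminorm_algebraMap_le (norm_nonneg _) hF_norm

end RestrictMul

theorem stmt11_general {X : Type*} [TopologicalSpace X] [NormalSpace X] {𝕜 : Type*} [RCLike 𝕜]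
    (K₀ K₁ : Set X) (h₀ : IsClosed K₀) (h₁ : IsClosed K₁) [CompactSpace K₀] [CompactSpace K₁]
    [CompactSpace ↥(K₀ ∩ K₁)] :
    ∃ e : (C(K₀, 𝕜) ⊗[C(X, 𝕜)] C(K₁, 𝕜)) ≃ₐ[C(X, 𝕜)] C(↥(K₀ ∩ K₁), 𝕜),
      (∀ (f : C(K₀, 𝕜)) (g : C(K₁, 𝕜)),
        e (f ⊗ₜ g) =
          f.comp ⟨Set.inclusion Set.inter_subset_left,
            continuous_inclusion Set.inter_subset_left⟩ *
          g.comp ⟨Set.inclusion Set.inter_subset_right,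
            continuous_inclusion Set.inter_subset_right⟩) ∧
      ∀ t, ‖e t‖ = projSeminorm 𝕜 K₀ K₁ t :=
  ⟨AlgEquiv.ofBijective (restrictMul 𝕜 K₀ K₁) (restrictMul_bijective h₀ h₁), fun _ _ => rfl,
    fun t => (norm_restrictMul_le_projSeminorm t).antisymm
      (projSeminorm_le_norm_restrictMul h₀ h₁ t)⟩

/-- The natural multiplication map
`C(K₀,𝕜) ⊗̂_{C(X,𝕜)} C(K₁,𝕜) → C(K₀ ∩ K₁, 𝕜)` is an isomorphism of Banach algebras:
the algebraic map `f ⊗ g ↦ f|_{K₀∩K₁} · g|_{K₀∩K₁}` is bounded for the projective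
tensor seminorm, bounded below by it (up to a constant), and has dense range; hence it
induces an isomorphism on completions. -/
theorem stmt11 {X : Type*} [TopologicalSpace X] [CompactSpace X] [T2Space X]
    {𝕜 : Type*} [RCLike 𝕜] (K₀ K₁ : Set X) (h₀ : IsClosed K₀) (h₁ : IsClosed K₁)
    [CompactSpace K₀] [CompactSpace K₁] [CompactSpace ↥(K₀ ∩ K₁)] :
    ∃ μ : (C(K₀, 𝕜) ⊗[C(X, 𝕜)] C(K₁, 𝕜)) →ₗ[C(X, 𝕜)] C(↥(K₀ ∩ K₁), 𝕜),
      (∀ (f : C(K₀, 𝕜)) (g : C(K₁, 𝕜)),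
        μ (f ⊗ₜ g) =
          f.comp ⟨Set.inclusion Set.inter_subset_left,
            continuous_inclusion Set.inter_subset_left⟩ *
          g.comp ⟨Set.inclusion Set.inter_subset_right,
            continuous_inclusion Set.inter_subset_right⟩) ∧
      (∀ t, ‖μ t‖ ≤ projSeminorm 𝕜 K₀ K₁ t) ∧
      (∃ c : ℝ, 0 < c ∧ ∀ t, projSeminorm 𝕜 K₀ K₁ t ≤ c * ‖μ t‖) ∧
      DenseRange μ := by
  obtain ⟨e, he_tmul, he_norm⟩ := stmt11_general (𝕜 := 𝕜) K₀ K₁ h₀ h₁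
  exact ⟨e.toLinearMap, he_tmul, fun t => (he_norm t).le,
    ⟨1, one_pos, fun t => by simp [he_norm]⟩, e.surjective.denseRange⟩

end
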